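/- Let R be a commutative ring. The following are equivalent: (1) R has an Artinian quotient ring Q = C⁻¹R; (2) (a) R̄ is a Goldie ring, (b) n is a nilpotent ideal, (c) C' ⊆ C, and (d) for every 1 ≤ i ≤ ν the R̄-module f_i contains no infinite direct sum of nonzero submodules; (3) (a) R̄ is a Goldie ring, (b) n is a nilpotent ideal, (c) every element of C̄ lifts to an element of C, and (d) for every 1 ≤ i ≤ ν the R̄-module f_i contains no infinite direct sum of nonzero submodules; (4) R is a Goldie ring and C' ⊆ C; (5) R is a Goldie ring and every element of C̄ lifts to an element of C. -/

import Mathlib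

universe u

/-- A subset of a ring is an annihilator set. -/
def IsAnnihilatorSet {R : Type*} [CommRing R] (A : Set R) : Prop :=
  ∃ S : Set R, A = {r : R | ∀ s ∈ S, r * s = 0}

/-- The ascending chain condition on annihilators. -/
def ACCAnnihilators (R : Type*) [CommRing R] : Prop :=
  ∀ f : ℕ → Set R, (∀ i, IsAnnihilatorSet (f i)) → (∀ i j, i ≤ j → f i ⊆ f j) →
    ∃ N, ∀ k, N ≤ k → f k = f N

/-- The module `M` contains no infinite direct sum of nonzero submodules. -/
def NoInfiniteIndepFamily (R : Type*) (M : Type*) [CommRing R] [AddCommGroup M]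
    [Module R M] : Prop :=
  ¬ ∃ f : ℕ → Submodule R M, (∀ i, f i ≠ ⊥) ∧ iSupIndep f

/-- A (commutative) Goldie ring: ACC on annihilators and no infinite direct sums of
nonzero ideals. -/
def IsGoldieRing (R : Type*) [CommRing R] : Prop :=
  ACCAnnihilators R ∧ NoInfiniteIndepFamily R R

/-- The subquotient `n^i/n^{i+1}` of `R`, where `n = nilradical R` is the prime radical. -/
abbrev grPieceC (R : Type u) [CommRing R] (i : ℕ) :=
  ↥(nilradical R ^ i) ⧸
    (Submodule.comap (nilradical R ^ i : Ideal R).subtype (nilradical R ^ (i + 1)))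

/-- The `C̄`-torsion submodule `τ_i` of `n^i/n^{i+1}` (the span of the set of torsion
elements, which is already a submodule in all relevant situations);  `C̄` is represented by
`C' = {c : R | c + n ∈ nonZeroDivisors (R/n)}`. -/
def tauSubC (R : Type u) [CommRing R] (i : ℕ) : Submodule R (grPieceC R i) :=
  Submodule.span R {u : grPieceC R i |
    ∃ c : R, Ideal.Quotient.mk (nilradical R) c ∈ nonZeroDivisors (R ⧸ nilradical R) ∧
      c • u = 0}

/-- The `C̄`-torsionfree module `f_i = (n^i/n^{i+1})/τ_i`. -/
abbrev fModC (R : Type u) [CommRing R] (i : ℕ) := grPieceC R i ⧸ tauSubC R i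

/-!
`C'` is the complement of the union of the minimal primes of `R`. The ascending chain condition on
annihilators makes the minimal primes finite in number and `n` nilpotent, so that `C' ⊆ C` forces,
by prime avoidance, every prime of `Q` to be minimal: `Q` is semiprimary with radical `nQ`.
Conversely, an Artinian `Q` is zero-dimensional, whence `C' ⊆ C`.

A semiprimary ring is filtered by modules with semisimple layers, and a semisimple module without
infinite direct sums of nonzero submodules is Noetherian. Filtering `Q` by the annihilators of the
powers of `nQ`, whose layers embed into finite powers of the socle, shows that a semiprimary Goldie
ring is Artinian. Filtering by the powers of `nQ` themselves shows that `Q` is Artinian as soon as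
the layers `n^iQ/n^{i+1}Q` contain no infinite direct sums, and when `C' ⊆ C` these layers are the
localizations of the modules `f_i`.
-/

/-! ### Infinite direct sums -/

namespace NoInfiniteIndepFamily

variable {R A M M' : Type*} [CommRing R] [CommRing A] [AddCommGroup M] [Module R M]
  [AddCommGroup M'] [Module A M']

theorem of_submodule_map (φ : Submodule A M' → Submodule R M) (hmono : Monotone φ)
    (hbot : ∀ N, φ N = ⊥ → N = ⊥) (hdisj : ∀ N P, Disjoint N P → Disjoint (φ N) (φ P))
    (h : NoInfiniteIndepFamily R M) : NoInfiniteIndepFamily A M' := by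
  rintro ⟨f, hf, hind⟩
  refine h ⟨fun j => φ (f j), fun j h0 => hf j (hbot _ h0), fun j => ?_⟩
  have hle : (⨆ (k) (_ : k ≠ j), φ (f k)) ≤ φ (⨆ (k) (_ : k ≠ j), f k) :=
    iSup₂_le fun k hk => hmono (le_iSup₂ (f := fun k (_ : k ≠ j) => f k) k hk)
  exact (hdisj _ _ (hind j)).mono_right hle

theorem of_isNoetherian [IsNoetherian R M] : NoInfiniteIndepFamily R M := by
  rintro ⟨f, hf, hind⟩
  have := WellFoundedGT.finite_of_iSupIndep hind hf
  exact not_finite ℕ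

theorem isNoetherian_of_isSemisimpleModule [IsSemisimpleModule R M]
    (h : NoInfiniteIndepFamily R M) : IsNoetherian R M := by
  obtain ⟨s, hs, htop, hsimple⟩ := IsSemisimpleModule.exists_sSupIndep_sSup_simples_eq_top R M
  have hfin : s.Finite := by
    by_contra hinf
    have : Infinite s := Set.infinite_coe_iff.2 hinf
    let e := Infinite.natEmbedding s
    exact h ⟨fun j => (e j : Submodule R M),
      fun j => (isSimpleModule_iff_isAtom.1 (hsimple _ (e j).2)).1,
      ((sSupIndep_iff s).1 hs).comp e.injective⟩
  refine (IsSemisimpleModule.finite_tfae.out 1 4).2 ?_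
  exact ⟨s, hfin, hs, htop, hsimple⟩

variable [Module R M']

theorem of_injective (g : M →ₗ[R] M') (hg : Function.Injective g)
    (h : NoInfiniteIndepFamily R M') : NoInfiniteIndepFamily R M :=
  h.of_submodule_map (Submodule.map g) (fun _ _ => Submodule.map_mono)
    (fun _ hN => Submodule.map_injective_of_injective hg (hN.trans (Submodule.map_bot g).symm))
    fun _ _ => Submodule.disjoint_map hg

variable [Algebra R A] [IsScalarTower R A M']

theorem to_isLocalization (S : Submonoid R) [IsLocalization S A] (g : M →ₗ[R] M')
    (hg : Function.Injective g) (hsurj : ∀ y, ∃ s : S, (s : R) • y ∈ LinearMap.range g)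
    (h : NoInfiniteIndepFamily R M) : NoInfiniteIndepFamily A M' := by
  refine h.of_submodule_map (fun N => (N.restrictScalars R).comap g)
    (fun N P hNP => Submodule.comap_mono hNP) (fun N hN => ?_) fun N P hNP => ?_
  · refine (Submodule.eq_bot_iff N).2 fun y hy => ?_
    obtain ⟨s, x, hx⟩ := hsurj y
    have hxN : x ∈ (N.restrictScalars R).comap g := by
      simpa only [Submodule.mem_comap, hx] using (N.restrictScalars R).smul_mem s hy
    rw [hN, Submodule.mem_bot] at hxN
    rw [hxN, map_zero, eq_comm, ← algebraMap_smul A] at hx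
    exact (IsLocalization.map_units A s).smul_eq_zero.1 hx
  · refine Submodule.disjoint_def.2 fun x hxN hxP => hg ?_
    rw [map_zero]
    exact Submodule.disjoint_def.1 hNP _ hxN hxP

theorem of_isLocalization (S : Submonoid R) [IsLocalization S A] (g : M →ₗ[R] M')
    (hg : Function.Injective g) (h : NoInfiniteIndepFamily A M') :
    NoInfiniteIndepFamily R M := by
  refine h.of_submodule_map (fun N => Submodule.span A (N.map g : Set M'))
    (fun N P hNP => Submodule.span_mono (Submodule.map_mono hNP)) (fun N hN => ?_)
    fun N P hNP => ?_
  · rw [Submodule.span_eq_bot] at hN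
    exact (Submodule.eq_bot_iff N).2 fun x hx =>
      hg ((hN _ (Submodule.mem_map_of_mem hx)).trans (map_zero g).symm)
  · have hdisj : Disjoint (N.map g) (P.map g) := Submodule.disjoint_map hg hNP
    refine Submodule.disjoint_def.2 fun y hyN hyP => ?_
    have clear_denominator {L : Submodule R M} (hy : y ∈ Submodule.span A (L.map g : Set M')) :
        ∃ s : S, (s : R) • y ∈ L.map g := by
      obtain ⟨z, hz, s, rfl⟩ := (IsLocalization.mem_span_iff S).1 hy
      rw [Submodule.span_eq] at hz
      refine ⟨s, ?_⟩
      rwa [← algebraMap_smul A, smul_smul, IsLocalization.mk'_spec', map_one, one_smul]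
    obtain ⟨s, hs⟩ := clear_denominator hyN
    obtain ⟨t, ht⟩ := clear_denominator hyP
    have hst : ((s * t : S) : R) • y = 0 := by
      refine Submodule.disjoint_def.1 hdisj _ ?_ ?_
      · rw [Submonoid.coe_mul, mul_comm, mul_smul]
        exact Submodule.smul_mem _ _ hs
      · rw [Submonoid.coe_mul, mul_smul]
        exact Submodule.smul_mem _ _ ht
    rw [← algebraMap_smul A] at hst
    exact (IsLocalization.map_units A (s * t)).smul_eq_zero.1 hst

end NoInfiniteIndepFamily

/-! ### The ascending chain condition on annihilators -/

section Annihilators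

variable {R : Type*} [CommRing R]

theorem isAnnihilatorSet_iff {A : Set R} :
    IsAnnihilatorSet A ↔ ∃ I : Ideal R, A = I.annihilator := by
  refine ⟨fun ⟨S, hS⟩ => ⟨Ideal.span S, ?_⟩, fun ⟨I, hI⟩ => ⟨I, ?_⟩⟩ <;> ext r
  · simp [hS, Ideal.span, Submodule.mem_annihilator_span]
  · simp [hI, Submodule.mem_annihilator]

theorem annihilator_annihilator_annihilator (I : Ideal R) :
    I.annihilator.annihilator.annihilator = I.annihilator := by
  have h (J : Ideal R) : J ≤ J.annihilator.annihilator :=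
    Submodule.le_annihilator_iff.2 (Submodule.mul_annihilator J)
  exact le_antisymm (Submodule.annihilator_mono (h I)) (h _)

theorem le_annihilator_mul_iff {I J K : Ideal R} :
    I ≤ (J * K).annihilator ↔ I * J ≤ K.annihilator := by
  simp only [Submodule.le_annihilator_iff, smul_eq_mul, mul_assoc]

theorem annihilator_mul_congr {I J : Ideal R} (h : I.annihilator = J.annihilator) (K : Ideal R) :
    (K * I).annihilator = (K * J).annihilator :=
  eq_of_forall_le_iff fun L => by rw [le_annihilator_mul_iff, le_annihilator_mul_iff, h]

theorem annihilator_pow_congr {I J : Ideal R} (h : I.annihilator = J.annihilator) (k : ℕ) :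
    (I ^ k).annihilator = (J ^ k).annihilator := by
  induction k with
  | zero => rw [pow_zero, pow_zero]
  | succ k ih =>
    rw [pow_succ, annihilator_mul_congr h, mul_comm, annihilator_mul_congr ih, ← pow_succ']

theorem accAnnihilators_iff_wellFoundedGT :
    ACCAnnihilators R ↔
      WellFoundedGT (Set.range (Submodule.annihilator : Ideal R → Ideal R)) := by
  rw [wellFoundedGT_iff_monotone_chain_condition]
  constructor
  · intro h a
    obtain ⟨N, hN⟩ := h (fun i => ((a i : Ideal R) : Set R))
      (fun i => isAnnihilatorSet_iff.2 ((a i).2.imp fun _ hI => congrArg _ hI.symm))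
      fun i j hij => a.monotone hij
    exact ⟨N, fun k hk => Subtype.ext (SetLike.coe_injective (hN k hk).symm)⟩
  · intro h f hf hmono
    choose I hI using fun i => isAnnihilatorSet_iff.1 (hf i)
    obtain ⟨N, hN⟩ := h ⟨fun i => ⟨(I i).annihilator, I i, rfl⟩, fun i j hij => by
      have := hmono i j hij
      rwa [hI, hI] at this⟩
    refine ⟨N, fun k hk => ?_⟩
    rw [hI, hI]
    exact congrArg SetLike.coe (congrArg Subtype.val (hN k hk).symm)

namespace ACCAnnihilators

theorem of_injective {A : Type*} [CommRing A] (g : R →+* A) (hg : Function.Injective g)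
    (h : ACCAnnihilators A) : ACCAnnihilators R := by
  have := accAnnihilators_iff_wellFoundedGT.1 h
  have hcomap (I : Ideal R) : (I.map g).annihilator.comap g = I.annihilator := by
    ext x
    rw [Ideal.mem_comap, Ideal.map, Ideal.span, Submodule.mem_annihilator_span,
      Submodule.mem_annihilator]
    simp [← map_mul, map_eq_zero_iff g hg]
  let φ (I : Set.range (Submodule.annihilator : Ideal R → Ideal R)) :
      Set.range (Submodule.annihilator : Ideal A → Ideal A) :=
    ⟨((I : Ideal R).annihilator.map g).annihilator, _, rfl⟩
  have hφ : StrictMono φ := by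
    refine Monotone.strictMono_of_injective (fun I J hIJ => ?_) fun I J hIJ => ?_
    · exact Submodule.annihilator_mono (Ideal.map_mono (Submodule.annihilator_mono hIJ))
    · obtain ⟨_, I, rfl⟩ := I
      obtain ⟨_, J, rfl⟩ := J
      have := congrArg (Ideal.comap g) (congrArg Subtype.val hIJ)
      simp only [φ, hcomap, annihilator_annihilator_annihilator] at this
      exact Subtype.ext this
  exact accAnnihilators_iff_wellFoundedGT.2 hφ.wellFoundedGT

theorem of_isNoetherianRing [IsNoetherianRing R] : ACCAnnihilators R :=
  accAnnihilators_iff_wellFoundedGT.2 inferInstance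

theorem of_isLocalization {Q : Type*} [CommRing Q] [Algebra R Q] (S : Submonoid R)
    [IsLocalization S Q] (hS : S ≤ nonZeroDivisors R) (h : ACCAnnihilators R) :
    ACCAnnihilators Q := by
  have := accAnnihilators_iff_wellFoundedGT.1 h
  have hinj := IsLocalization.injective Q hS
  have hcomap (I : Ideal Q) :
      I.annihilator.comap (algebraMap R Q) = (I.comap (algebraMap R Q)).annihilator := by
    ext x
    have hI : I = Submodule.span Q (algebraMap R Q '' I.comap (algebraMap R Q)) :=
      (IsLocalization.map_under S Q I).symm
    rw [hI, Ideal.mem_comap, Submodule.mem_annihilator_span, ← hI, Submodule.mem_annihilator]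
    simp [← map_mul, map_eq_zero_iff _ hinj]
  let φ (I : Set.range (Submodule.annihilator : Ideal Q → Ideal Q)) :
      Set.range (Submodule.annihilator : Ideal R → Ideal R) :=
    ⟨(I : Ideal Q).comap (algebraMap R Q), by
      obtain ⟨_, I, rfl⟩ := I
      exact ⟨_, (hcomap I).symm⟩⟩
  have hφ : StrictMono φ := fun I J hIJ =>
    (IsLocalization.orderEmbedding S Q).lt_iff_lt.2 hIJ
  exact accAnnihilators_iff_wellFoundedGT.2 hφ.wellFoundedGT

theorem wellFounded_annihilator_gt (h : ACCAnnihilators R) :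
    WellFounded fun I J : Ideal R => J.annihilator < I.annihilator :=
  have := accAnnihilators_iff_wellFoundedGT.1 h
  InvImage.wf (Set.rangeFactorization Submodule.annihilator) wellFounded_gt

theorem wellFounded_annihilator_lt (h : ACCAnnihilators R) :
    WellFounded fun I J : Ideal R => I.annihilator < J.annihilator := by
  refine Subrelation.wf (fun {I J} hIJ => ?_)
    (InvImage.wf Submodule.annihilator h.wellFounded_annihilator_gt)
  refine (Submodule.annihilator_mono hIJ.le).lt_of_ne fun heq => hIJ.ne ?_
  rw [← annihilator_annihilator_annihilator I, ← heq, annihilator_annihilator_annihilator]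

theorem exists_fg_annihilator_eq (h : ACCAnnihilators R) (K : Ideal R) :
    ∃ I ≤ K, I.FG ∧ I.annihilator = K.annihilator := by
  obtain ⟨I, ⟨hIK, hI⟩, hmin⟩ := h.wellFounded_annihilator_lt.has_min
    {I : Ideal R | I ≤ K ∧ I.FG} ⟨⊥, bot_le, Submodule.fg_bot⟩
  refine ⟨I, hIK, hI, le_antisymm (fun y hy => ?_) (Submodule.annihilator_mono hIK)⟩
  refine Submodule.mem_annihilator.2 fun x hx => ?_
  have hle : (I ⊔ Ideal.span {x}).annihilator ≤ I.annihilator :=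
    Submodule.annihilator_mono le_sup_left
  have heq : (I ⊔ Ideal.span {x}).annihilator = I.annihilator :=
    eq_of_le_of_not_lt hle <| hmin _
      ⟨sup_le hIK ((Ideal.span_singleton_le_iff_mem K).2 hx),
        Submodule.FG.sup hI (Submodule.fg_span_singleton x)⟩
  rw [← heq] at hy
  exact Submodule.mem_annihilator.1 hy x (Ideal.mem_sup_right (Ideal.mem_span_singleton_self x))

theorem isNilpotent_nilradical (h : ACCAnnihilators R) : IsNilpotent (nilradical R) := by
  obtain ⟨I, hI, hfg, hann⟩ := h.exists_fg_annihilator_eq (nilradical R)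
  obtain ⟨m, hm⟩ := (Ideal.FG.isNilpotent_iff_le_nilradical hfg).2 hI
  refine ⟨m, Submodule.annihilator_eq_top_iff.1 ?_⟩
  rw [← annihilator_pow_congr hann, hm]
  exact Submodule.annihilator_bot

end ACCAnnihilators

theorem minimalPrimes_subset_union {I J₁ J₂ : Ideal R} (h₁ : I ≤ J₁) (h₂ : I ≤ J₂)
    (hmul : J₁ * J₂ ≤ I) : I.minimalPrimes ⊆ J₁.minimalPrimes ∪ J₂.minimalPrimes := by
  have key {J p : Ideal R} (hI : I ≤ J) (hp : p ∈ I.minimalPrimes) (hJp : J ≤ p) :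
      p ∈ J.minimalPrimes :=
    ⟨⟨hp.1.1, hJp⟩, fun q hq hqp => hp.2 ⟨hq.1, hI.trans hq.2⟩ hqp⟩
  intro p hp
  exact (hp.1.1.mul_le.1 (hmul.trans hp.1.2)).imp (key h₁ hp) (key h₂ hp)

/- If `x * y ∈ ann K`, then the annihilators of `x K` and of `ann (x K) K` both contain `ann K`,
have product inside `ann K`, and contain `y` and `x` respectively. -/
theorem exists_annihilator_lt_of_not_isPrime {K : Ideal R} (htop : K.annihilator ≠ ⊤)
    (hK : ¬ K.annihilator.IsPrime) :
    ∃ K₁ K₂ : Ideal R, K.annihilator < K₁.annihilator ∧ K.annihilator < K₂.annihilator ∧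
      K₁.annihilator * K₂.annihilator ≤ K.annihilator := by
  obtain ⟨x, hx, y, hy, hxy⟩ := (Ideal.not_isPrime_iff.1 hK).resolve_left htop
  let K₁ := Ideal.span {x} * K
  let K₂ := K₁.annihilator * K
  have hy₁ : y ∈ K₁.annihilator := by
    rwa [← Ideal.span_singleton_le_iff_mem, le_annihilator_mul_iff,
      Ideal.span_singleton_mul_span_singleton, Ideal.span_singleton_le_iff_mem, mul_comm]
  have hx₂ : x ∈ K₂.annihilator := by
    rw [← Ideal.span_singleton_le_iff_mem, Submodule.le_annihilator_iff, smul_eq_mul,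
      mul_left_comm]
    exact Submodule.annihilator_mul K₁
  refine ⟨K₁, K₂, (Submodule.annihilator_mono Ideal.mul_le_right).lt_of_not_ge fun hle => ?_,
    (Submodule.annihilator_mono Ideal.mul_le_right).lt_of_not_ge fun hle => ?_, ?_⟩
  · exact hy (hle hy₁)
  · exact hx (hle hx₂)
  · rw [mul_comm, ← le_annihilator_mul_iff]

theorem ACCAnnihilators.finite_minimalPrimes (h : ACCAnnihilators R) :
    (minimalPrimes R).Finite := by
  have hfin (K : Ideal R) : K.annihilator.minimalPrimes.Finite := by
    induction K using h.wellFounded_annihilator_gt.induction with | _ K ih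
    by_cases htop : K.annihilator = ⊤
    · simp [htop, Ideal.minimalPrimes_top]
    by_cases hK : K.annihilator.IsPrime
    · simp [Ideal.minimalPrimes_eq_subsingleton_self]
    obtain ⟨K₁, K₂, h₁, h₂, hmul⟩ := exists_annihilator_lt_of_not_isPrime htop hK
    exact ((ih K₁ h₁).union (ih K₂ h₂)).subset (minimalPrimes_subset_union h₁.le h₂.le hmul)
  have hann : (⊤ : Ideal R).annihilator = ⊥ := by
    rw [← Ideal.mul_top (⊤ : Ideal R).annihilator, Submodule.annihilator_mul]
  simpa only [hann] using hfin ⊤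

end Annihilators

/-! ### Artinian criteria for semiprimary rings -/

section Semiprimary

variable {Q : Type*} [CommRing Q]

theorem isSemiprimaryRing_of_krullDimLE_zero [Ring.KrullDimLE 0 Q]
    (hfin : (minimalPrimes Q).Finite) (hnil : IsNilpotent (nilradical Q)) :
    IsSemiprimaryRing Q := by
  have : Finite {p : Ideal Q // p.IsPrime} :=
    (Ring.KrullDimLE.minimalPrimes_eq_setOfPred_isPrime Q ▸ hfin).to_subtype
  have (p : {p : Ideal Q // p.IsPrime}) : p.1.IsMaximal := p.2.isMaximal'
  have (p : {p : Ideal Q // p.IsPrime}) : IsSemisimpleRing (Q ⧸ p.1) :=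
    let _ := Ideal.Quotient.field p.1
    inferInstance
  have hcoprime : Pairwise fun p q : {p : Ideal Q // p.IsPrime} => IsCoprime p.1 q.1 :=
    fun _ _ hne => Ideal.isCoprime_of_isMaximal (Subtype.coe_ne_coe.2 hne)
  have hsemi : IsSemisimpleRing (Q ⧸ nilradical Q) := by
    rw [nilradical_eq_sInf, sInf_eq_iInf']
    exact (Ideal.quotientInfRingEquivPiQuotient _ hcoprime).symm.isSemisimpleRing
  rw [← Ring.jacobson_eq_nilradical_of_krullDimLE_zero] at hsemi hnil
  exact ⟨hsemi, hnil⟩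

theorem isSemisimpleModule_of_isTorsionBySet {M : Type*} [AddCommGroup M] [Module Q M]
    {I : Ideal Q} [IsSemisimpleRing (Q ⧸ I)] (h : Module.IsTorsionBySet Q M I) :
    IsSemisimpleModule Q M :=
  letI := h.module
  h.isSemisimpleModule_iff.1 inferInstance

/- Multiplication by finitely many elements of `K` that already detect `ann K` embeds
`ann (K * I) / ann K` into a finite power of `ann I`. -/
theorem ACCAnnihilators.isNoetherian_annihilator_mul (h : ACCAnnihilators Q) (K I : Ideal Q)
    [IsNoetherian Q K.annihilator] [IsNoetherian Q I.annihilator] :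
    IsNoetherian Q (K * I).annihilator := by
  obtain ⟨_, hsK, ⟨s, rfl⟩, hann⟩ := h.exists_fg_annihilator_eq K
  have hmem (x : s) (y : (K * I).annihilator) : (x : Q) * y ∈ I.annihilator := by
    rw [← Ideal.span_singleton_le_iff_mem, mul_comm, ← Ideal.span_singleton_mul_span_singleton]
    exact (Ideal.mul_mono ((Ideal.span_singleton_le_iff_mem _).2 y.2)
      ((Ideal.span_singleton_le_iff_mem _).2 (hsK (Ideal.subset_span x.2)))).trans
      (le_annihilator_mul_iff.1 le_rfl)
  let φ : (K * I).annihilator →ₗ[Q] (s → I.annihilator) :=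
    LinearMap.pi fun x => ((LinearMap.mulLeft Q (x : Q)).comp
      (K * I).annihilator.subtype).codRestrict I.annihilator (hmem x)
  have hker : LinearMap.ker φ = Submodule.comap (K * I).annihilator.subtype K.annihilator := by
    ext y
    rw [Submodule.mem_comap, ← hann, Submodule.mem_annihilator_span, LinearMap.mem_ker,
      funext_iff]
    refine forall_congr' fun x => Subtype.ext_iff.trans ?_
    rw [smul_eq_mul, mul_comm _ (x : Q)]
    rfl
  refine isNoetherian_of_range_eq_ker
    (Submodule.inclusion (Submodule.annihilator_mono Ideal.mul_le_left)) φ ?_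
  rw [Submodule.range_inclusion, hker]

theorem IsGoldieRing.isArtinianRing_of_isSemiprimaryRing [IsSemiprimaryRing Q]
    (h : IsGoldieRing Q) : IsArtinianRing Q := by
  set J := Ring.jacobson Q
  have hsocle : IsNoetherian Q J.annihilator := by
    have htor : Module.IsTorsionBySet Q J.annihilator J := fun y x =>
      Subtype.ext (by simpa [mul_comm] using Submodule.mem_annihilator.1 y.2 x x.2)
    have := isSemisimpleModule_of_isTorsionBySet htor
    exact (h.2.of_injective J.annihilator.subtype
      (Submodule.subtype_injective _)).isNoetherian_of_isSemisimpleModule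
  have hpow (i : ℕ) : IsNoetherian Q (J ^ (i + 1)).annihilator := by
    induction i with
    | zero => rwa [zero_add, pow_one]
    | succ i ih => exact pow_succ J (i + 1) ▸ h.1.isNoetherian_annihilator_mul (J ^ (i + 1)) J
  obtain ⟨k, hk⟩ := IsSemiprimaryRing.isNilpotent (R := Q)
  have htop : (J ^ (k + 1)).annihilator = ⊤ := by
    rw [pow_succ, hk, zero_mul]
    exact Submodule.annihilator_bot
  have : IsNoetherianRing Q := isNoetherian_top_iff.1 (htop ▸ hpow k)
  exact IsSemiprimaryRing.isNoetherian_iff_isArtinian.1 this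

theorem jacobson_eq_nilradical_of_isSemiprimaryRing [IsSemiprimaryRing Q] :
    Ring.jacobson Q = nilradical Q := by
  refine le_antisymm (fun x hx => ?_) (nilradical_le_jacobson Q)
  obtain ⟨k, hk⟩ := IsSemiprimaryRing.isNilpotent (R := Q)
  exact mem_nilradical.2 ⟨k, by simpa [hk] using Ideal.pow_mem_pow hx k⟩

end Semiprimary

section Filtration

variable {Q : Type u} [CommRing Q]

theorem isNoetherian_nilradical_pow_of_grPieceC (i : ℕ) [IsNoetherian Q (grPieceC Q i)]
    [IsNoetherian Q ↥(nilradical Q ^ (i + 1))] : IsNoetherian Q ↥(nilradical Q ^ i) :=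
  (isNoetherian_iff_submodule_quotient _).2 ⟨isNoetherian_of_linearEquiv
    (Submodule.comapSubtypeEquivOfLe (Ideal.pow_le_pow_right i.le_succ)).symm, ‹_›⟩

theorem isSemisimpleModule_grPieceC [IsSemiprimaryRing Q] (i : ℕ) :
    IsSemisimpleModule Q (grPieceC Q i) := by
  have : IsSemisimpleRing (Q ⧸ nilradical Q) :=
    jacobson_eq_nilradical_of_isSemiprimaryRing (Q := Q) ▸ IsSemiprimaryRing.isSemisimpleRing
  refine isSemisimpleModule_of_isTorsionBySet (I := nilradical Q) ?_
  rintro y ⟨x, hx⟩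
  obtain ⟨z, rfl⟩ := Submodule.Quotient.mk_surjective _ y
  refine (Submodule.Quotient.mk_eq_zero _).2 ?_
  change x * (z : Q) ∈ nilradical Q ^ (i + 1)
  exact pow_succ' (nilradical Q) i ▸ Ideal.mul_mem_mul hx z.2

theorem isArtinianRing_of_noInfiniteIndepFamily_grPieceC [IsSemiprimaryRing Q]
    (h : ∀ i, 1 ≤ i → nilradical Q ^ i ≠ ⊥ → NoInfiniteIndepFamily Q (grPieceC Q i)) :
    IsArtinianRing Q := by
  have htop : nilradical Q ^ 0 = ⊤ := by rw [pow_zero, Ideal.one_eq_top]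
  have hlayer (i : ℕ) (hi : nilradical Q ^ i ≠ ⊥) : IsNoetherian Q (grPieceC Q i) := by
    have := isSemisimpleModule_grPieceC (Q := Q) i
    obtain rfl | hpos := i.eq_zero_or_pos
    · have : Module.Finite Q ↥(nilradical Q ^ 0) :=
        Module.Finite.iff_fg.2 (htop ▸ Module.Finite.fg_top)
      have : Module.Finite Q (grPieceC Q 0) := inferInstance
      exact (IsSemisimpleModule.finite_tfae.out 0 1).1 this
    · exact (h i hpos hi).isNoetherian_of_isSemisimpleModule
  obtain ⟨k, hk⟩ := jacobson_eq_nilradical_of_isSemiprimaryRing (Q := Q) ▸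
    IsSemiprimaryRing.isNilpotent (R := Q)
  have hpow (i : ℕ) (hi : i ≤ k) : IsNoetherian Q ↥(nilradical Q ^ i) := by
    induction hi using Nat.decreasingInduction with
    | self => rw [hk]; exact inferInstanceAs (IsNoetherian Q (⊥ : Ideal Q))
    | of_succ i _ ih =>
      by_cases hbot : nilradical Q ^ i = ⊥
      · rw [hbot]
        infer_instance
      · have := hlayer i hbot
        exact isNoetherian_nilradical_pow_of_grPieceC i
  have : IsNoetherianRing Q := isNoetherian_top_iff.1 (htop ▸ hpow 0 k.zero_le)
  exact IsSemiprimaryRing.isNoetherian_iff_isArtinian.1 this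

end Filtration

/-! ### Regular elements modulo the nilradical -/

/-- The submonoid `C'` of elements of `R` that are regular modulo the nilradical; in these terms,
the condition `C' ⊆ C` is `regularModNilradical R ≤ nonZeroDivisors R`. -/
def regularModNilradical (R : Type*) [CommRing R] : Submonoid R :=
  (nonZeroDivisors (R ⧸ nilradical R)).comap (Ideal.Quotient.mk (nilradical R))

section RegularModNilradical

variable {R : Type*} [CommRing R]

theorem mem_regularModNilradical_iff {c : R} :
    c ∈ regularModNilradical R ↔ ∀ p ∈ minimalPrimes R, c ∉ p := by
  have hunion : c ∈ (⋃ p ∈ minimalPrimes R, (p : Set R)) ↔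
      ∃ y ∉ nilradical R, c * y ∈ nilradical R :=
    Set.ext_iff.1 (Ideal.iUnion_minimalPrimes (I := (⊥ : Ideal R))) c
  have hmem : c ∈ regularModNilradical R ↔ ∀ y, c * y ∈ nilradical R → y ∈ nilradical R := by
    refine mem_nonZeroDivisors_iff_left.trans (Ideal.Quotient.mk_surjective.forall.trans ?_)
    simp only [← map_mul, Ideal.Quotient.eq_zero_iff_mem]
  simp only [Set.mem_iUnion, SetLike.mem_coe, exists_prop] at hunion
  rw [hmem, ← not_iff_not]
  push Not
  rw [hunion]
  exact exists_congr fun y => and_comm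

theorem nonZeroDivisors_le_regularModNilradical :
    nonZeroDivisors R ≤ regularModNilradical R := fun _ hc =>
  mem_regularModNilradical_iff.2 fun _ hp hcp =>
    notMem_nonZeroDivisors_of_mem_mem_minimalPrimes hcp hp hc

variable (R) in
theorem minimalPrimes_eq_image_comap_quotient_nilradical :
    minimalPrimes R =
      Ideal.comap (Ideal.Quotient.mk (nilradical R)) '' minimalPrimes (R ⧸ nilradical R) := by
  rw [← Ideal.minimalPrimes_eq_comap, nilradical, Ideal.radical_minimalPrimes]
  rfl

theorem isUnit_algebraMap_iff_mem_nonZeroDivisors (Q : Type*) [CommRing Q] [Algebra R Q]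
    [IsLocalization (nonZeroDivisors R) Q] {c : R} :
    IsUnit (algebraMap R Q c) ↔ c ∈ nonZeroDivisors R := by
  rw [IsLocalization.algebraMap_isUnit_iff (nonZeroDivisors R)]
  refine ⟨fun ⟨_, hm, d, hd⟩ => ?_, fun hc => ⟨c, hc, dvd_rfl⟩⟩
  exact (mul_mem_nonZeroDivisors.1 (hd ▸ hm)).1

theorem mem_nonZeroDivisors_of_sub_mem_nilradical {c d : R} (hc : c ∈ nonZeroDivisors R)
    (h : d - c ∈ nilradical R) : d ∈ nonZeroDivisors R := by
  let Q := Localization (nonZeroDivisors R)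
  rw [← isUnit_algebraMap_iff_mem_nonZeroDivisors Q] at hc ⊢
  have hnil : IsNilpotent (algebraMap R Q (d - c)) := (mem_nilradical.1 h).map (algebraMap R Q)
  rw [← sub_add_cancel d c, map_add]
  exact hnil.isUnit_add_right_of_commute hc (Commute.all _ _)

theorem regularModNilradical_le_iff_forall_exists_lift :
    regularModNilradical R ≤ nonZeroDivisors R ↔
      ∀ α : R ⧸ nilradical R, α ∈ nonZeroDivisors (R ⧸ nilradical R) →
        ∃ c : R, c ∈ nonZeroDivisors R ∧ Ideal.Quotient.mk (nilradical R) c = α := by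
  refine ⟨fun h α hα => ?_, fun h c hc => ?_⟩
  · obtain ⟨c, rfl⟩ := Ideal.Quotient.mk_surjective α
    exact ⟨c, h hα, rfl⟩
  · obtain ⟨d, hd, hdc⟩ := h _ hc
    exact mem_nonZeroDivisors_of_sub_mem_nilradical hd (Ideal.Quotient.eq.1 hdc.symm)

end RegularModNilradical

/-! ### The quotient ring -/

section Localization

variable {R : Type*} [CommRing R] (S : Submonoid R) (Q : Type*) [CommRing Q] [Algebra R Q]

theorem minimalPrimes_localization [IsLocalization S Q] :
    minimalPrimes Q = Ideal.comap (algebraMap R Q) ⁻¹' minimalPrimes R := by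
  have := IsLocalization.minimalPrimes_map S Q (⊥ : Ideal R)
  rwa [Ideal.map_bot] at this

theorem finite_minimalPrimes_localization [IsLocalization S Q]
    (hfin : (minimalPrimes R).Finite) : (minimalPrimes Q).Finite := by
  rw [minimalPrimes_localization S Q]
  exact hfin.preimage (IsLocalization.orderEmbedding S Q).injective.injOn

theorem nilradical_localization [IsLocalization S Q] :
    nilradical Q = (nilradical R).map (algebraMap R Q) := by
  rw [nilradical, nilradical, IsLocalization.map_radical S]
  exact congrArg Ideal.radical Ideal.map_bot.symm

theorem nilradical_pow_localization [IsLocalization S Q] (i : ℕ) :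
    nilradical Q ^ i = (nilradical R ^ i).map (algebraMap R Q) := by
  rw [nilradical_localization S Q, Ideal.map_pow]

variable {S} in
theorem isGoldieRing_localization_iff [IsLocalization S Q] (hS : S ≤ nonZeroDivisors R) :
    IsGoldieRing Q ↔ IsGoldieRing R := by
  have hinj := IsLocalization.injective Q hS
  refine ⟨fun h => ⟨h.1.of_injective (algebraMap R Q) hinj,
    h.2.of_isLocalization S (Algebra.linearMap R Q) hinj⟩, fun h => ⟨h.1.of_isLocalization S hS,
    h.2.to_isLocalization S (Algebra.linearMap R Q) hinj fun y => ?_⟩⟩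
  obtain ⟨⟨r, s⟩, hrs⟩ := IsLocalization.surj S y
  exact ⟨s, r, by rw [Algebra.smul_def, mul_comm, hrs, Algebra.linearMap_apply]⟩

end Localization

theorem IsGoldieRing.of_isNoetherianRing {R : Type*} [CommRing R] [IsNoetherianRing R] :
    IsGoldieRing R :=
  ⟨.of_isNoetherianRing, .of_isNoetherian⟩

section QuotientRing

variable {R : Type*} [CommRing R] (Q : Type*) [CommRing Q] [Algebra R Q]
  [IsLocalization (nonZeroDivisors R) Q]

theorem regularModNilradical_le_of_krullDimLE_zero [Ring.KrullDimLE 0 Q] :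
    regularModNilradical R ≤ nonZeroDivisors R := by
  intro c hc
  rw [← isUnit_algebraMap_iff_mem_nonZeroDivisors Q]
  by_contra hunit
  obtain ⟨P, hP, hcP⟩ := exists_max_ideal_of_mem_nonunits hunit
  have := hP.isPrime
  have hPmin : P ∈ minimalPrimes Q := P.mem_minimalPrimes_of_krullDimLE_zero
  rw [minimalPrimes_localization (nonZeroDivisors R) Q] at hPmin
  exact mem_regularModNilradical_iff.1 hc _ hPmin hcP

/- A prime of `Q` contracts to zero divisors, which `C' ⊆ C` puts in the union of the finitely many
minimal primes; by prime avoidance the contraction lies in one of them. -/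
theorem krullDimLE_zero_of_regularModNilradical_le (hfin : (minimalPrimes R).Finite)
    (hC : regularModNilradical R ≤ nonZeroDivisors R) : Ring.KrullDimLE 0 Q := by
  have hmin (P : Ideal Q) (hP : P.IsPrime) : P ∈ minimalPrimes Q := by
    have hsub : (P.comap (algebraMap R Q) : Set R) ⊆ ⋃ p ∈ minimalPrimes R, p := by
      intro x hx
      by_contra hmem
      have hxC : x ∈ nonZeroDivisors R := hC (mem_regularModNilradical_iff.2 (by
        simpa only [Set.mem_iUnion, SetLike.mem_coe, exists_prop, not_exists, not_and] using hmem))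
      exact hP.ne_top (P.eq_top_of_isUnit_mem hx (IsLocalization.map_units Q ⟨x, hxC⟩))
    obtain ⟨p, hp, hle⟩ := (Ideal.subset_union_prime_finite hfin (f := id) ⊥ ⊥
      fun p hp _ _ => hp.1.1).1 hsub
    rw [minimalPrimes_localization (nonZeroDivisors R) Q, Set.mem_preimage]
    exact le_antisymm hle (hp.2 ⟨hP.comap _, bot_le⟩ hle) ▸ hp
  refine .mk₀ fun P hP => ?_
  obtain ⟨M, hM, hle⟩ := P.exists_le_maximal hP.ne_top
  exact le_antisymm hle ((hmin M hM.isPrime).2 ⟨hP, bot_le⟩ hle) ▸ hM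

theorem isSemiprimaryRing_of_regularModNilradical_le (hfin : (minimalPrimes R).Finite)
    (hnil : IsNilpotent (nilradical R)) (hC : regularModNilradical R ≤ nonZeroDivisors R) :
    IsSemiprimaryRing Q := by
  have := krullDimLE_zero_of_regularModNilradical_le Q hfin hC
  refine isSemiprimaryRing_of_krullDimLE_zero
    (finite_minimalPrimes_localization (nonZeroDivisors R) Q hfin) ?_
  rw [nilradical_localization (nonZeroDivisors R) Q]
  exact hnil.map (Ideal.mapHom (algebraMap R Q))

theorem isGoldieRing_quotient_nilradical [IsNoetherianRing Q] :
    IsGoldieRing (R ⧸ nilradical R) := by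
  let S := Algebra.algebraMapSubmonoid (R ⧸ nilradical R) (nonZeroDivisors R)
  have hS : S ≤ nonZeroDivisors (R ⧸ nilradical R) :=
    Submonoid.map_le_iff_le_comap.2 nonZeroDivisors_le_regularModNilradical
  exact (isGoldieRing_localization_iff (Q ⧸ (nilradical R).map (algebraMap R Q)) hS).1
    .of_isNoetherianRing

end QuotientRing

/-! ### The layers of the nilradical filtration -/

section Subquotient

variable {R : Type u} [CommRing R] (Q : Type*) [CommRing Q] [Algebra R Q]

theorem algebraMap_mem_nilradical_pow {i : ℕ} {x : R} (hx : x ∈ nilradical R ^ i) :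
    algebraMap R Q x ∈ nilradical Q ^ i := by
  have hle : (nilradical R).map (algebraMap R Q) ≤ nilradical Q :=
    Ideal.map_le_iff_le_comap.2 fun y hy => (mem_nilradical.1 hy).map (algebraMap R Q)
  refine Ideal.pow_right_mono hle i ?_
  rw [← Ideal.map_pow]
  exact Ideal.mem_map_of_mem _ hx

/-- The map of subquotients `n^i/n^{i+1} → (nil Q)^i/(nil Q)^{i+1}` induced by `R → Q`. -/
def grPieceMap (i : ℕ) : grPieceC R i →ₗ[R] grPieceC Q i :=
  Submodule.liftQ _
    ((Submodule.mkQ _).restrictScalars R ∘ₗ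
      (Algebra.linearMap R Q).restrict (p := nilradical R ^ i)
        (q := (nilradical Q ^ i).restrictScalars R) fun _ => algebraMap_mem_nilradical_pow Q)
    fun x (hx : (x : R) ∈ nilradical R ^ (i + 1)) =>
      (Submodule.Quotient.mk_eq_zero _).2 (algebraMap_mem_nilradical_pow Q hx)

theorem grPieceMap_mk {i : ℕ} (x : ↥(nilradical R ^ i)) :
    grPieceMap Q i (Submodule.Quotient.mk x) =
      Submodule.Quotient.mk ⟨algebraMap R Q x, algebraMap_mem_nilradical_pow Q x.2⟩ :=
  rfl

variable [IsLocalization (nonZeroDivisors R) Q]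

theorem grPieceMap_eq_zero_iff {i : ℕ} {u : grPieceC R i} :
    grPieceMap Q i u = 0 ↔ ∃ c ∈ nonZeroDivisors R, c • u = 0 := by
  obtain ⟨x, rfl⟩ := Submodule.Quotient.mk_surjective _ u
  rw [grPieceMap_mk, Submodule.Quotient.mk_eq_zero, Submodule.mem_comap, Submodule.subtype_apply,
    nilradical_pow_localization (nonZeroDivisors R) Q,
    IsLocalization.algebraMap_mem_map_algebraMap_iff (nonZeroDivisors R) Q]
  refine exists_congr fun c => and_congr_right fun _ => ?_
  rw [← Submodule.Quotient.mk_smul, Submodule.Quotient.mk_eq_zero]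
  rfl

theorem exists_smul_mem_range_grPieceMap {i : ℕ} (y : grPieceC Q i) :
    ∃ s : nonZeroDivisors R, (s : R) • y ∈ LinearMap.range (grPieceMap (R := R) Q i) := by
  obtain ⟨⟨q, hq⟩, rfl⟩ := Submodule.Quotient.mk_surjective _ y
  obtain ⟨⟨a, s⟩, hqs⟩ := (IsLocalization.mem_map_algebraMap_iff (nonZeroDivisors R) Q).1
    (nilradical_pow_localization (nonZeroDivisors R) Q i ▸ hq)
  refine ⟨s, Submodule.Quotient.mk a, ?_⟩
  rw [grPieceMap_mk, ← Submodule.Quotient.mk_smul]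
  refine congrArg _ (Subtype.ext ?_)
  change algebraMap R Q a = (s : R) • q
  rw [Algebra.smul_def, mul_comm, hqs]

theorem ker_grPieceMap (hC : regularModNilradical R ≤ nonZeroDivisors R) (i : ℕ) :
    LinearMap.ker (grPieceMap (R := R) Q i) = tauSubC R i := by
  refine le_antisymm (fun u hu => ?_) (Submodule.span_le.2 ?_)
  · obtain ⟨c, hc, hcu⟩ := (grPieceMap_eq_zero_iff Q).1 hu
    exact Submodule.subset_span ⟨c, nonZeroDivisors_le_regularModNilradical hc, hcu⟩
  · rintro u ⟨c, hc, hcu⟩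
    exact (grPieceMap_eq_zero_iff Q).2 ⟨c, hC hc, hcu⟩

theorem noInfiniteIndepFamily_fModC_iff (hC : regularModNilradical R ≤ nonZeroDivisors R)
    (i : ℕ) : NoInfiniteIndepFamily R (fModC R i) ↔ NoInfiniteIndepFamily Q (grPieceC Q i) := by
  let g : fModC R i →ₗ[R] grPieceC Q i :=
    Submodule.liftQ _ (grPieceMap Q i) (ker_grPieceMap Q hC i).ge
  have hg : Function.Injective g :=
    LinearMap.ker_eq_bot.1 (Submodule.ker_liftQ_eq_bot _ _ _ (ker_grPieceMap Q hC i).le)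
  refine ⟨fun h => h.to_isLocalization (nonZeroDivisors R) g hg fun y => ?_,
    fun h => h.of_isLocalization (nonZeroDivisors R) g hg⟩
  rw [Submodule.range_liftQ]
  exact exists_smul_mem_range_grPieceMap Q y

end Subquotient

/-! ### The criterion -/

section Criterion

theorem isNilpotent_iff_exists_pow_succ {M : Type*} [MonoidWithZero M] {x : M} :
    IsNilpotent x ↔ ∃ k : ℕ, x ^ (k + 1) = 0 :=
  ⟨fun ⟨k, hk⟩ => ⟨k, by rw [pow_succ, hk, zero_mul]⟩, fun ⟨k, hk⟩ => ⟨k + 1, hk⟩⟩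

variable {R : Type u} [CommRing R] (Q : Type*) [CommRing Q] [Algebra R Q]
  [IsLocalization (nonZeroDivisors R) Q]

theorem isArtinianRing_iff_isGoldieRing :
    IsArtinianRing Q ↔ IsGoldieRing R ∧ regularModNilradical R ≤ nonZeroDivisors R := by
  rw [← isGoldieRing_localization_iff Q (le_refl (nonZeroDivisors R))]
  refine ⟨fun _ => ⟨.of_isNoetherianRing, regularModNilradical_le_of_krullDimLE_zero Q⟩,
    fun ⟨hQ, hC⟩ => ?_⟩
  have hR := (isGoldieRing_localization_iff Q (le_refl (nonZeroDivisors R))).1 hQ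
  have := isSemiprimaryRing_of_regularModNilradical_le Q hR.1.finite_minimalPrimes
    hR.1.isNilpotent_nilradical hC
  exact hQ.isArtinianRing_of_isSemiprimaryRing

theorem isArtinianRing_iff_noInfiniteIndepFamily_fModC :
    IsArtinianRing Q ↔ IsGoldieRing (R ⧸ nilradical R) ∧ IsNilpotent (nilradical R) ∧
      regularModNilradical R ≤ nonZeroDivisors R ∧
      ∀ i, 1 ≤ i → nilradical R ^ i ≠ ⊥ → NoInfiniteIndepFamily R (fModC R i) := by
  refine ⟨fun hQ => ?_, fun ⟨hG, hnil, hC, hf⟩ => ?_⟩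
  · obtain ⟨hR, hC⟩ := (isArtinianRing_iff_isGoldieRing (R := R) Q).1 hQ
    exact ⟨isGoldieRing_quotient_nilradical Q, hR.1.isNilpotent_nilradical, hC,
      fun i _ _ => (noInfiniteIndepFamily_fModC_iff Q hC i).2 .of_isNoetherian⟩
  · have hfin : (minimalPrimes R).Finite := minimalPrimes_eq_image_comap_quotient_nilradical R ▸
      hG.1.finite_minimalPrimes.image _
    have := isSemiprimaryRing_of_regularModNilradical_le Q hfin hnil hC
    refine isArtinianRing_of_noInfiniteIndepFamily_grPieceC fun i hi hne =>
      (noInfiniteIndepFamily_fModC_iff Q hC i).1 (hf i hi fun hbot => hne ?_)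
    rw [nilradical_pow_localization (nonZeroDivisors R) Q, hbot, Ideal.map_bot]

end Criterion

/-- **Corollary (`x10Sep12`; with P. F. Smith).** Let `R` be a commutative ring,
`n = nilradical R` its prime radical, `R̄ = R/n`, `C` its set of regular elements
(non-zero-divisors) and `C'` the preimage of `C̄` under `R → R̄`.  TFAE:
(1) `R` has an Artinian quotient ring `Q = C⁻¹R` (encoded: the localization of `R` at
`nonZeroDivisors R` is Artinian);
(2) (a) `R̄` is a Goldie ring, (b) `n` is nilpotent, (c) `C' ⊆ C`, (d) for `1 ≤ i ≤ ν` the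
`R̄`-module `f_i` contains no infinite direct sum of nonzero submodules (the range
`1 ≤ i ≤ ν` is encoded as `1 ≤ i` and `n^i ≠ ⊥`);
(3) as (2) with (c) replaced by: every element of `C̄` lifts to an element of `C`;
(4) `R` is a Goldie ring and `C' ⊆ C`;
(5) `R` is a Goldie ring and every element of `C̄` lifts to an element of `C`. -/
theorem commutative_artinian_quotient_ring_criterion (R : Type u) [CommRing R] :
    (IsArtinianRing (Localization (nonZeroDivisors R)) ↔
      (IsGoldieRing (R ⧸ nilradical R) ∧
        (∃ k : ℕ, nilradical R ^ (k + 1) = ⊥) ∧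
        (∀ c : R, Ideal.Quotient.mk (nilradical R) c ∈ nonZeroDivisors (R ⧸ nilradical R) →
          c ∈ nonZeroDivisors R) ∧
        (∀ i : ℕ, 1 ≤ i → nilradical R ^ i ≠ ⊥ → NoInfiniteIndepFamily R (fModC R i)))) ∧
    (IsArtinianRing (Localization (nonZeroDivisors R)) ↔
      (IsGoldieRing (R ⧸ nilradical R) ∧
        (∃ k : ℕ, nilradical R ^ (k + 1) = ⊥) ∧
        (∀ α : R ⧸ nilradical R, α ∈ nonZeroDivisors (R ⧸ nilradical R) →
          ∃ c : R, c ∈ nonZeroDivisors R ∧ Ideal.Quotient.mk (nilradical R) c = α) ∧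
        (∀ i : ℕ, 1 ≤ i → nilradical R ^ i ≠ ⊥ → NoInfiniteIndepFamily R (fModC R i)))) ∧
    (IsArtinianRing (Localization (nonZeroDivisors R)) ↔
      (IsGoldieRing R ∧
        (∀ c : R, Ideal.Quotient.mk (nilradical R) c ∈ nonZeroDivisors (R ⧸ nilradical R) →
          c ∈ nonZeroDivisors R))) ∧
    (IsArtinianRing (Localization (nonZeroDivisors R)) ↔
      (IsGoldieRing R ∧
        (∀ α : R ⧸ nilradical R, α ∈ nonZeroDivisors (R ⧸ nilradical R) →
          ∃ c : R, c ∈ nonZeroDivisors R ∧ Ideal.Quotient.mk (nilradical R) c = α))) := by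
  have hGoldie := isArtinianRing_iff_isGoldieRing (R := R) (Localization (nonZeroDivisors R))
  have hLayers := isArtinianRing_iff_noInfiniteIndepFamily_fModC (R := R)
    (Localization (nonZeroDivisors R))
  rw [isNilpotent_iff_exists_pow_succ] at hLayers
  refine ⟨hLayers, ?_, hGoldie, ?_⟩
  · rwa [← regularModNilradical_le_iff_forall_exists_lift]
  · rwa [← regularModNilradical_le_iff_forall_exists_lift]
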